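/- arXiv:0812.1752 — 2 statements merged into one kernel-verified Lean document; each statement's English description precedes it below -/
import Mathlib

section
/- Let K ≥ 1, let L be an integer with 0 ≤ L ≤ K, and let a = (a_0, ..., a_K) be a nonzero vector of real numbers with a_k = 0 for all k ≤ L. Then the cosine polynomial C_a(x) = ∑_{k=0}^{K} a_k cos(kx) satisfies Z(C_a) ≥ 2L, where Z(f) denotes the number of zeros of f in [0, 2π) counted with multiplicity. -/
open Real Set
open scoped ENNReal

/-- The multiplicity of a zero `x` of `f`: the least `n ≥ 1` such that the
`n`-th derivative of `f` at `x` is nonzero. -/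
noncomputable def zeroMult (f : ℝ → ℝ) (x : ℝ) : ℕ :=
  sInf {n : ℕ | 1 ≤ n ∧ iteratedDeriv n f x ≠ 0}

/-- The number of zeros of `f` in one period `[0, 2π)`, counted with multiplicity. -/
noncomputable def Zcount (f : ℝ → ℝ) : ℝ≥0∞ :=
  ∑' x : {x : ℝ // x ∈ Set.Ico (0 : ℝ) (2 * Real.pi) ∧ f x = 0},
    (zeroMult f x.1 : ℝ≥0∞)


/-!
Substituting `t = cos x` turns the cosine polynomial into `P(t) = ∑ a_k T_k(t)`, which is orthogonal
to every polynomial of degree less than `n` for the Chebyshev weight on `(-1, 1)` when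
`a_0, …, a_{n-1}` vanish. If `P` had fewer than `n` distinct roots in `(-1, 1)`, then the product
`R` of the factors `t - s` over its roots `s` of odd multiplicity, up to sign, would have degree
less than `n` while `P R ≥ 0` on `(-1, 1)`, contradicting `∫ P R = 0`. Each root `cos x` in
`(-1, 1)` gives the two zeros `x` and `2π - x`.
-/

open MeasureTheory Polynomial Polynomial.Chebyshev
open scoped Finset

section ZeroCount

variable {f : ℝ → ℝ}

theorem one_le_zeroMult {x : ℝ} (hf : AnalyticAt ℝ f x) (hfin : analyticOrderAt f x ≠ ⊤)
    (hx : f x = 0) : 1 ≤ zeroMult f x := by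
  obtain ⟨n, hn⟩ := ENat.ne_top_iff_exists.mp hfin
  have hderiv : iteratedDeriv n f x ≠ 0 :=
    ((analyticOrderAt_eq_nat_iff_iteratedDeriv_eq_zero hf).mp hn.symm).2
  have hn1 : 1 ≤ n := by
    rw [Nat.one_le_iff_ne_zero]
    rintro rfl
    exact hderiv (by rwa [iteratedDeriv_zero])
  exact (Nat.sInf_mem (s := {n | 1 ≤ n ∧ iteratedDeriv n f x ≠ 0}) ⟨n, hn1, hderiv⟩).1

theorem card_le_Zcount (hf : ∀ x, AnalyticAt ℝ f x) (hf0 : f ≠ 0) {T : Finset ℝ}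
    (hT : ∀ x ∈ T, x ∈ Ico 0 (2 * π) ∧ f x = 0) : (#T : ℝ≥0∞) ≤ Zcount f := by
  have hmult (x : T) : (1 : ℝ≥0∞) ≤ zeroMult f x := by
    have hfin : analyticOrderAt f x ≠ ⊤ := by
      rwa [Ne, AnalyticOnNhd.analyticOrderAt_eq_top_iff_eq_zero _ hf]
    exact_mod_cast one_le_zeroMult (hf x) hfin (hT x x.2).2
  let incl : T → {x : ℝ // x ∈ Ico 0 (2 * π) ∧ f x = 0} := fun x => ⟨x, hT x x.2⟩
  have hincl : Function.Injective incl := fun x y h => Subtype.ext (congrArg (·.1) h)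
  calc (#T : ℝ≥0∞) = ∑ _x : T, 1 := by simp
    _ ≤ ∑ x : T, (zeroMult f x : ℝ≥0∞) := Finset.sum_le_sum fun x _ => hmult x
    _ = ∑' x : T, (zeroMult f (incl x).1 : ℝ≥0∞) := (tsum_fintype _).symm
    _ ≤ Zcount f := ENNReal.tsum_comp_le_tsum_of_injective hincl _

theorem two_mul_card_le_Zcount_of_symm (hf : ∀ x, AnalyticAt ℝ f x) (hf0 : f ≠ 0)
    (hsymm : ∀ x, f (2 * π - x) = f x) {T : Finset ℝ} (hT : ∀ x ∈ T, x ∈ Ioo 0 π ∧ f x = 0) :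
    (2 * #T : ℝ≥0∞) ≤ Zcount f := by
  let T' := T.image (2 * π - ·)
  have hdisj : Disjoint T T' := by
    rw [Finset.disjoint_left]
    intro x hx hx'
    obtain ⟨y, hy, rfl⟩ := Finset.mem_image.mp hx'
    linarith [(hT _ hx).1.2, (hT y hy).1.2]
  have hcard : #(T ∪ T') = 2 * #T := by
    rw [Finset.card_union_of_disjoint hdisj,
      Finset.card_image_of_injective _ sub_right_injective, two_mul]
  have hzero : ∀ x ∈ T ∪ T', x ∈ Ico 0 (2 * π) ∧ f x = 0 := by
    intro x hx
    rcases Finset.mem_union.mp hx with hx | hx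
    · obtain ⟨⟨hx0, hxπ⟩, hfx⟩ := hT x hx
      exact ⟨⟨hx0.le, by linarith⟩, hfx⟩
    · obtain ⟨y, hy, rfl⟩ := Finset.mem_image.mp hx
      obtain ⟨⟨hy0, hyπ⟩, hfy⟩ := hT y hy
      exact ⟨⟨by linarith, by linarith⟩, (hsymm y).trans hfy⟩
  exact_mod_cast hcard ▸ card_le_Zcount hf hf0 hzero

theorem eval_cos_ne_zero {P : ℝ[X]} (hP : P ≠ 0) : (fun x => P.eval (cos x)) ≠ 0 := by
  intro h
  refine hP (eq_zero_of_infinite_isRoot P ((Icc_infinite (by norm_num : (-1 : ℝ) < 1)).mono ?_))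
  intro t ht
  obtain ⟨x, rfl⟩ : t ∈ range cos := range_cos ▸ ht
  exact congrFun h x

theorem two_mul_card_roots_le_Zcount_eval_cos {P : ℝ[X]} (hP : P ≠ 0) {S : Finset ℝ}
    (hS : ∀ s ∈ S, s ∈ Ioo (-1 : ℝ) 1 ∧ P.IsRoot s) :
    (2 * #S : ℝ≥0∞) ≤ Zcount (fun x => P.eval (cos x)) := by
  have hcos : ∀ s ∈ S, cos (arccos s) = s := fun s hs =>
    cos_arccos (hS s hs).1.1.le (hS s hs).1.2.le
  have hcard : #(S.image arccos) = #S :=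
    Finset.card_image_of_injOn fun s hs t ht hst => by rw [← hcos s hs, ← hcos t ht, hst]
  rw [← hcard]
  refine two_mul_card_le_Zcount_of_symm (fun x => ?_) (eval_cos_ne_zero hP) (fun x => ?_) ?_
  · exact analyticAt_cos.aeval_polynomial P
  · rw [cos_two_pi_sub]
  · intro x hx
    obtain ⟨s, hs, rfl⟩ := Finset.mem_image.mp hx
    obtain ⟨⟨hs_gt, hs_lt⟩, hroot⟩ := hS s hs
    exact ⟨⟨arccos_pos.mpr hs_lt, arccos_lt_pi.mpr hs_gt⟩, by rwa [hcos s hs]⟩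

end ZeroCount

section OrthogonalPolynomials

variable {I : Set ℝ} {P : ℝ[X]}

theorem nonneg_or_nonpos_of_forall_not_isRoot (hI : IsPreconnected I)
    (hP : ∀ t ∈ I, ¬P.IsRoot t) : (∀ t ∈ I, 0 ≤ P.eval t) ∨ (∀ t ∈ I, P.eval t ≤ 0) := by
  by_contra! h
  obtain ⟨⟨t, ht, hneg⟩, ⟨u, hu, hpos⟩⟩ := h
  obtain ⟨z, hz, hPz⟩ := hI.intermediate_value ht hu P.continuousOn ⟨hneg.le, hpos.le⟩
  exact hP z hz hPz

theorem exists_mul_nonneg_natDegree_le_card (hI : IsPreconnected I) (hP : P ≠ 0) {S : Finset ℝ}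
    (hS : ∀ t ∈ I, P.IsRoot t → t ∈ S) :
    ∃ R : ℝ[X], R ≠ 0 ∧ R.natDegree ≤ #S ∧ ∀ t ∈ I, 0 ≤ (P * R).eval t := by
  induction S using Finset.induction_on generalizing P with
  | empty =>
    rcases nonneg_or_nonpos_of_forall_not_isRoot hI
      fun t ht hPt => Finset.notMem_empty t (hS t ht hPt) with h | h
    · exact ⟨1, one_ne_zero, by simp, by simpa using h⟩
    · exact ⟨-1, neg_ne_zero.mpr one_ne_zero, by simp, by simpa using h⟩
  | insert s S hs ih =>
    obtain ⟨Q, hPQ, hQs⟩ := P.exists_eq_pow_rootMultiplicity_mul_and_not_dvd hP s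
    generalize P.rootMultiplicity s = m at hPQ
    subst hPQ
    have hQ : ∀ t ∈ I, Q.IsRoot t → t ∈ S := by
      intro t ht hQt
      refine Finset.mem_of_mem_insert_of_ne (hS t ht (hQt.dvd (dvd_mul_left ..))) ?_
      rintro rfl
      exact hQs (dvd_iff_isRoot.mpr hQt)
    obtain ⟨R, hR, hdeg, hnonneg⟩ := ih (right_ne_zero_of_mul hP) hQ
    have hpow : (X - C s) ^ (m % 2) ≠ 0 := pow_ne_zero _ (X_sub_C_ne_zero s)
    refine ⟨(X - C s) ^ (m % 2) * R, mul_ne_zero hpow hR, ?_, fun t ht => ?_⟩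
    · rw [natDegree_mul hpow hR, natDegree_pow, natDegree_X_sub_C, Finset.card_insert_of_notMem hs]
      lia
    · have heven : Even (m + m % 2) := by grind
      have hsplit : (X - C s) ^ m * Q * ((X - C s) ^ (m % 2) * R)
          = (X - C s) ^ (m + m % 2) * (Q * R) := by ring
      rw [hsplit, eval_mul, eval_pow]
      exact mul_nonneg (heven.pow_nonneg _) (hnonneg t ht)

variable {μ : Measure ℝ} [NullSingletonClass μ] [NeZero μ]

theorem integral_eval_pos (hP : P ≠ 0) (hint : Integrable (fun t => P.eval t) μ)
    (hnonneg : ∀ᵐ t ∂μ, 0 ≤ P.eval t) : 0 < ∫ t, P.eval t ∂μ := by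
  have hroots : μ {t | P.IsRoot t} = 0 := (finite_setOfPred_isRoot hP).measure_zero μ
  rw [integral_pos_iff_support_of_nonneg_ae hnonneg hint, pos_iff_ne_zero]
  intro hsupp
  have huniv : μ univ = 0 :=
    measure_mono_null (fun t _ => em (P.eval t = 0)) (measure_union_null hroots hsupp)
  exact NeZero.ne μ (Measure.measure_univ_eq_zero.mp huniv)

theorem exists_card_roots_ge_of_orthogonal (hI : IsPreconnected I) (hμI : ∀ᵐ t ∂μ, t ∈ I)
    (hint : ∀ Q : ℝ[X], Integrable (fun t => Q.eval t) μ) (hP : P ≠ 0) {n : ℕ}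
    (horth : ∀ R : ℝ[X], R.degree < n → ∫ t, (P * R).eval t ∂μ = 0) :
    ∃ S : Finset ℝ, n ≤ #S ∧ ∀ s ∈ S, s ∈ I ∧ P.IsRoot s := by
  have hfin : {t ∈ I | P.IsRoot t}.Finite :=
    (finite_setOfPred_isRoot hP).subset fun t ht => ht.2
  obtain ⟨R, hR, hdeg, hnonneg⟩ := exists_mul_nonneg_natDegree_le_card hI hP
    (S := hfin.toFinset) fun t ht hPt => hfin.mem_toFinset.mpr ⟨ht, hPt⟩
  refine ⟨hfin.toFinset, ?_, fun s hs => hfin.mem_toFinset.mp hs⟩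
  by_contra! hlt
  have hzero := horth R ((natDegree_lt_iff_degree_lt hR).mp (hdeg.trans_lt hlt))
  exact (integral_eval_pos (mul_ne_zero hP hR) (hint _) (hμI.mono hnonneg)).ne' hzero

end OrthogonalPolynomials

section Chebyshev

instance nullSingletonClass_measureT : NullSingletonClass measureT := by
  unfold measureT
  infer_instance

instance neZero_measureT : NeZero measureT where
  out h := by
    have hmass := integral_eval_T_real_measureT_zero
    rw [h, integral_zero_measure] at hmass
    exact pi_ne_zero hmass.symm

theorem ae_measureT_mem_Ioo : ∀ᵐ t ∂measureT, t ∈ Ioo (-1 : ℝ) 1 := by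
  unfold measureT
  rw [← Measure.restrict_congr_set Ioo_ae_eq_Ioc]
  exact ae_restrict_mem measurableSet_Ioo

theorem integrable_eval_measureT (P : ℝ[X]) : Integrable (fun t => P.eval t) measureT :=
  integrable_measureT P.continuousOn

theorem integral_T_mul_eval_measureT_of_degree_lt {k : ℕ} {R : ℝ[X]} (hR : R.degree < k) :
    ∫ t, (T ℝ k * R).eval t ∂measureT = 0 := by
  have hspan : R ∈ Submodule.span ℝ (chebyshevTsequence ℝ '' Iio k) := by
    rw [Sequence.span_degreeLT _ fun i _ => ?_, mem_degreeLT]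
    · exact hR
    · exact (leadingCoeff_ne_zero.mpr (Sequence.ne_zero _ i)).isUnit
  clear hR
  induction hspan using Submodule.span_induction with
  | mem Q hQ =>
    obtain ⟨i, hi, rfl⟩ := hQ
    simp_rw [eval_mul]
    exact integral_eval_T_real_mul_eval_T_real_measureT_of_ne (ne_of_gt hi)
  | zero => simp
  | add Q₁ Q₂ _ _ h₁ h₂ =>
    simp_rw [mul_add, eval_add]
    rw [integral_add (integrable_eval_measureT _) (integrable_eval_measureT _), h₁, h₂, add_zero]
  | smul c Q _ h =>
    simp_rw [mul_smul_comm, eval_smul]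
    rw [integral_smul, h, smul_zero]

variable {N : ℕ}

/-- The Chebyshev expansion `∑ a_k T_k` with coefficients `a`: the polynomial in `cos x` that
represents the cosine polynomial `∑ a_k cos (k x)`. -/
noncomputable def chebyshevSum (a : Fin N → ℝ) : ℝ[X] :=
  ∑ k : Fin N, a k • T ℝ (k : ℕ)

theorem eval_cos_chebyshevSum (a : Fin N → ℝ) (x : ℝ) :
    (chebyshevSum a).eval (cos x) = ∑ k : Fin N, a k * cos ((k : ℕ) * x) := by
  simp [chebyshevSum, eval_finsetSum, T_real_cos]

theorem chebyshevSum_ne_zero {a : Fin N → ℝ} (ha : a ≠ 0) : chebyshevSum a ≠ 0 := by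
  intro h
  have hli : LinearIndependent ℝ fun k : Fin N => T ℝ (k : ℕ) :=
    (chebyshevTsequence ℝ).linearIndependent.comp _ Fin.val_injective
  exact ha (funext (Fintype.linearIndependent_iff.mp hli a h))

theorem integral_chebyshevSum_mul_eval_measureT_of_degree_lt {a : Fin N → ℝ} {n : ℕ}
    (ha : ∀ k : Fin N, (k : ℕ) < n → a k = 0) {R : ℝ[X]} (hR : R.degree < n) :
    ∫ t, (chebyshevSum a * R).eval t ∂measureT = 0 := by
  simp_rw [chebyshevSum, Finset.sum_mul, smul_mul_assoc, eval_finsetSum, eval_smul]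
  rw [integral_finsetSum _ fun k _ => Integrable.fun_smul (a k) (integrable_eval_measureT _)]
  refine Finset.sum_eq_zero fun k _ => ?_
  rw [integral_smul]
  rcases lt_or_ge (k : ℕ) n with hk | hk
  · rw [ha k hk, zero_smul]
  · have hRk : R.degree < (k : ℕ) := hR.trans_le (by exact_mod_cast hk)
    rw [integral_T_mul_eval_measureT_of_degree_lt hRk, smul_zero]

end Chebyshev

theorem cosine_vanishing_low_coeffs_zero_count_general {N n : ℕ} {a : Fin N → ℝ} (ha : a ≠ 0)
    (hlow : ∀ k : Fin N, (k : ℕ) < n → a k = 0) :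
    (2 * n : ℝ≥0∞) ≤ Zcount (fun x => ∑ k : Fin N, a k * cos ((k : ℕ) * x)) := by
  have hP : chebyshevSum a ≠ 0 := chebyshevSum_ne_zero ha
  obtain ⟨S, hcard, hS⟩ := exists_card_roots_ge_of_orthogonal isPreconnected_Ioo
    ae_measureT_mem_Ioo integrable_eval_measureT hP
    fun _ => integral_chebyshevSum_mul_eval_measureT_of_degree_lt hlow
  simp_rw [← eval_cos_chebyshevSum]
  calc (2 * n : ℝ≥0∞) ≤ 2 * #S := by gcongr
    _ ≤ Zcount (fun x => (chebyshevSum a).eval (cos x)) :=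
      two_mul_card_roots_le_Zcount_eval_cos hP hS

theorem cosine_vanishing_low_coeffs_zero_count (K L : ℕ) (hK : 1 ≤ K) (hL : L ≤ K)
    (a : Fin (K + 1) → ℝ) (ha : a ≠ 0)
    (hlow : ∀ k : Fin (K + 1), (k : ℕ) ≤ L → a k = 0) :
    (2 * L : ℝ≥0∞) ≤
      Zcount (fun x => ∑ k : Fin (K + 1), a k * Real.cos ((k : ℕ) * x)) :=
  cosine_vanishing_low_coeffs_zero_count_general ha fun k hk => hlow k hk.le
end

section
/- Let K ≥ 1 and let b = (b_0, b_1, ..., b_K) be real numbers. Define the sine polynomials S_b(x) = ∑_{k=0}^{K} b_k sin(kx) and S_b̄(x) = ∑_{k=0}^{K} b_{K-k} sin(kx). If neither S_b nor S_b̄ is identically zero, then Z(S_b) + Z(S_b̄) ≥ 2K, where Z(f) denotes the number of zeros of f in [0, 2π) counted with multiplicity. -/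
open Real Set
open scoped ENNReal

/-!
At the points `t j = j * π / K` the two polynomials satisfy `S_b̄ (t j) = -(-1) ^ j * S_b (t j)`,
because `sin ((K - k) * t j) = -(-1) ^ j * sin (k * t j)`. So the product `S_b * S_b̄` has opposite
signs at consecutive points, and each of the `2 * K` steps of the grid contains a zero of `S_b` or
of `S_b̄`. Looking for zeros of `S_b` in `[t j, t (j + 1))` and for those of `S_b̄` in
`(t j, t (j + 1)]` keeps a zero at a grid point from being counted twice. The zeros found are
distinct, so multiplicities enter only through being at least one.
-/

section Encard

variable {α : Type*} [LinearOrder α]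

lemma encard_sep_Ioc_le_encard_sep_Ico (p : α → Prop) {a b : α} (ha : p a) :
    {x ∈ Ioc a b | p x}.encard ≤ {x ∈ Ico a b | p x}.encard := by
  rcases le_or_gt b a with hba | hab
  · simp [Ioc_eq_empty_of_le hba]
  have hIoc : {x ∈ Ioc a b | p x} ⊆ insert b {x ∈ Ioo a b | p x} := by
    rintro x ⟨⟨hax, hxb⟩, hx⟩
    exact hxb.eq_or_lt.imp_right fun hlt => ⟨⟨hax, hlt⟩, hx⟩
  have hIco : insert a {x ∈ Ioo a b | p x} ⊆ {x ∈ Ico a b | p x} :=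
    insert_subset ⟨left_mem_Ico.2 hab, ha⟩ fun x hx => ⟨Ioo_subset_Ico_self hx.1, hx.2⟩
  calc {x ∈ Ioc a b | p x}.encard
      ≤ (insert b {x ∈ Ioo a b | p x}).encard := encard_le_encard hIoc
    _ ≤ {x ∈ Ioo a b | p x}.encard + 1 := encard_insert_le _ _
    _ = (insert a {x ∈ Ioo a b | p x}).encard :=
      (encard_insert_of_notMem fun h => lt_irrefl a h.1.1).symm
    _ ≤ {x ∈ Ico a b | p x}.encard := encard_le_encard hIco

lemma encard_sep_Ico_add_encard_sep_Ico (p : α → Prop) {a b c : α} (hab : a ≤ b) (hbc : b ≤ c) :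
    {x ∈ Ico a b | p x}.encard + {x ∈ Ico b c | p x}.encard = {x ∈ Ico a c | p x}.encard := by
  rw [← Ico_union_Ico_eq_Ico hab hbc, ← encard_union_eq
    (Ico_disjoint_Ico_same.mono (sep_subset _ _) (sep_subset _ _))]
  exact congrArg encard sep_union.symm

lemma encard_sep_Ioc_add_encard_sep_Ioc (p : α → Prop) {a b c : α} (hab : a ≤ b) (hbc : b ≤ c) :
    {x ∈ Ioc a b | p x}.encard + {x ∈ Ioc b c | p x}.encard = {x ∈ Ioc a c | p x}.encard := by
  rw [← Ioc_union_Ioc_eq_Ioc hab hbc, ← encard_union_eq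
    ((Ioc_disjoint_Ioc_of_le le_rfl).mono (sep_subset _ _) (sep_subset _ _))]
  exact congrArg encard sep_union.symm

end Encard

section SignChange

variable {α : Type*} [ConditionallyCompleteLinearOrder α] [TopologicalSpace α] [OrderTopology α]
  [DenselyOrdered α] {f g : α → ℝ} {s : ℝ}

lemma nonempty_zeros_Ico_or_nonempty_zeros_Ioc {a b : α} (hab : a < b)
    (hf : ContinuousOn f (Icc a b)) (hg : ContinuousOn g (Icc a b)) (hs : s ≠ 0)
    (ha : g a = s * f a) (hb : g b = -s * f b) :
    {x ∈ Ico a b | f x = 0}.Nonempty ∨ {x ∈ Ioc a b | g x = 0}.Nonempty := by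
  by_cases hfa : f a = 0
  · exact .inl ⟨a, left_mem_Ico.2 hab, hfa⟩
  by_cases hgb : g b = 0
  · exact .inr ⟨b, right_mem_Ioc.2 hab, hgb⟩
  have hpos : 0 < s * (f a * g a) := by
    rw [ha, show s * (f a * (s * f a)) = (s * f a) ^ 2 by ring]
    positivity
  have hneg : s * (f b * g b) < 0 := by
    rw [show s * (f b * g b) = -(g b ^ 2) by rw [hb]; ring]
    exact neg_neg_of_pos (by positivity)
  obtain ⟨x, hx, hx0⟩ := intermediate_value_Ioo' hab.le
    (continuousOn_const.mul (hf.mul hg)) ⟨hneg, hpos⟩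
  rcases mul_eq_zero.1 ((mul_eq_zero.1 hx0).resolve_left hs) with hfx | hgx
  · exact .inl ⟨x, Ioo_subset_Ico_self hx, hfx⟩
  · exact .inr ⟨x, Ioo_subset_Ioc_self hx, hgx⟩

lemma natCast_le_encard_zeros_Ico_add_encard_zeros_Ioc (hf : Continuous f) (hg : Continuous g)
    (hs : s ≠ 0) {t : ℕ → α} (ht : StrictMono t)
    (h : ∀ j, g (t j) = s * (-1) ^ j * f (t j)) (n : ℕ) :
    (n : ℕ∞) ≤ {x ∈ Ico (t 0) (t n) | f x = 0}.encard +
      {x ∈ Ioc (t 0) (t n) | g x = 0}.encard := by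
  induction n with
  | zero => simp
  | succ n ih =>
    have hstep : 1 ≤ {x ∈ Ico (t n) (t (n + 1)) | f x = 0}.encard +
        {x ∈ Ioc (t n) (t (n + 1)) | g x = 0}.encard :=
      (nonempty_zeros_Ico_or_nonempty_zeros_Ioc (ht n.lt_succ_self) hf.continuousOn
        hg.continuousOn (by positivity) (h n) (by rw [h (n + 1)]; ring)).elim
        (fun hne => (one_le_encard_iff_nonempty.2 hne).trans le_self_add)
        (fun hne => (one_le_encard_iff_nonempty.2 hne).trans le_add_self)
    have h0n : t 0 ≤ t n := ht.monotone n.zero_le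
    have hn : t n ≤ t (n + 1) := ht.monotone n.le_succ
    rw [← encard_sep_Ico_add_encard_sep_Ico _ h0n hn, ← encard_sep_Ioc_add_encard_sep_Ioc _ h0n hn,
      add_add_add_comm, Nat.cast_add_one]
    exact add_le_add ih hstep

end SignChange

section Multiplicity

lemma exists_iteratedDeriv_ne_zero {𝕜 E : Type*} [NontriviallyNormedField 𝕜] [CharZero 𝕜]
    [PreconnectedSpace 𝕜] [NormedAddCommGroup E] [NormedSpace 𝕜 E] [CompleteSpace E] {f : 𝕜 → E}
    (hf : AnalyticOnNhd 𝕜 f univ) (hne : ∃ y, f y ≠ 0) (x : 𝕜) :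
    ∃ n, iteratedDeriv n f x ≠ 0 := by
  by_contra! hall
  have htop : analyticOrderAt f x = ⊤ := ENat.eq_top_iff_forall_ge.2 fun _ =>
    (natCast_le_analyticOrderAt_iff_iteratedDeriv_eq_zero (hf x trivial)).2 fun i _ => hall i
  obtain ⟨y, hy⟩ := hne
  exact hy (congrFun
    ((AnalyticOnNhd.analyticOrderAt_eq_top_iff_eq_zero x fun z => hf z trivial).1 htop) y)

variable {f : ℝ → ℝ}

lemma one_le_zeroMult_s4 {x : ℝ} (h : ∃ n, iteratedDeriv n f x ≠ 0) (hx : f x = 0) :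
    1 ≤ zeroMult f x := by
  obtain ⟨n, hn⟩ := h
  have hn1 : 1 ≤ n := Nat.one_le_iff_ne_zero.2 <| by
    rintro rfl
    exact hn (by rwa [iteratedDeriv_zero])
  exact (Nat.sInf_mem (s := {n | 1 ≤ n ∧ iteratedDeriv n f x ≠ 0}) ⟨n, hn1, hn⟩).1

lemma encard_zeros_le_Zcount (hf : AnalyticOnNhd ℝ f univ) (hne : ∃ y, f y ≠ 0) :
    ({x ∈ Ico 0 (2 * π) | f x = 0}.encard : ℝ≥0∞) ≤ Zcount f := by
  rw [← ENNReal.tsum_set_one]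
  refine ENNReal.tsum_le_tsum fun x => ?_
  exact_mod_cast one_le_zeroMult_s4 (exists_iteratedDeriv_ne_zero hf hne x) x.2.2

end Multiplicity

/-- The sine polynomial `S_b` with coefficients `b`, indexed from frequency `0`. The polynomial
with reversed coefficients, `S_b̄`, is `sinePoly fun k => b k.rev`. -/
noncomputable def sinePoly {n : ℕ} (b : Fin n → ℝ) (x : ℝ) : ℝ :=
  ∑ k, b k * sin ((k : ℕ) * x)

lemma analyticOnNhd_sinePoly {n : ℕ} (b : Fin n → ℝ) : AnalyticOnNhd ℝ (sinePoly b) univ := by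
  intro x _
  unfold sinePoly
  fun_prop

lemma continuous_sinePoly {n : ℕ} (b : Fin n → ℝ) : Continuous (sinePoly b) := by
  unfold sinePoly
  fun_prop

lemma sinePoly_zero {n : ℕ} (b : Fin n → ℝ) : sinePoly b 0 = 0 := by
  simp [sinePoly]

lemma sinePoly_rev_of_mul_eq_nat_mul_pi {K : ℕ} (b : Fin (K + 1) → ℝ) {j : ℕ} {x : ℝ}
    (hx : K * x = j * π) : sinePoly (fun k => b k.rev) x = -1 * (-1) ^ j * sinePoly b x := by
  have hsin (k : Fin (K + 1)) :
      sin ((k.rev : ℕ) * x) = -1 * (-1) ^ j * sin ((k : ℕ) * x) := by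
    have hrev : ((k.rev : ℕ) : ℝ) = K - (k : ℕ) := by
      rw [Fin.val_rev, Nat.add_sub_add_right, Nat.cast_sub (Fin.is_le k)]
    rw [hrev, sub_mul, hx, sin_nat_mul_pi_sub]
    ring
  unfold sinePoly
  rw [← Equiv.sum_comp Fin.revPerm, Finset.mul_sum]
  refine Finset.sum_congr rfl fun k _ => ?_
  simp only [Fin.revPerm_apply, Fin.rev_rev, hsin]
  ring

theorem palindromic_sine_zero_count_general (K : ℕ) (b : Fin (K + 1) → ℝ) :
    (2 * K : ℕ∞) ≤ {x ∈ Ico 0 (2 * π) | sinePoly b x = 0}.encard +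
      {x ∈ Ico 0 (2 * π) | sinePoly (fun k => b k.rev) x = 0}.encard := by
  rcases K.eq_zero_or_pos with rfl | hK
  · simp
  let t : ℕ → ℝ := fun j => j * π / K
  have ht : StrictMono t := fun i j hij => by
    dsimp only [t]
    gcongr
  have hnode (j : ℕ) : sinePoly (fun k => b k.rev) (t j) = -1 * (-1) ^ j * sinePoly b (t j) :=
    sinePoly_rev_of_mul_eq_nat_mul_pi b (by simp only [t]; field_simp)
  have ht0 : t 0 = 0 := by simp [t]
  have htK : t (2 * K) = 2 * π := by
    simp only [t]
    push_cast
    field_simp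
  have hcount := natCast_le_encard_zeros_Ico_add_encard_zeros_Ioc (continuous_sinePoly b)
    (continuous_sinePoly fun k => b k.rev) (neg_ne_zero.2 one_ne_zero) ht hnode (2 * K)
  rw [ht0, htK] at hcount
  exact_mod_cast hcount.trans (add_le_add_right
    (encard_sep_Ioc_le_encard_sep_Ico (sinePoly (fun k => b k.rev) · = 0) (sinePoly_zero _)) _)

theorem palindromic_sine_zero_count (K : ℕ) (hK : 1 ≤ K) (b : Fin (K + 1) → ℝ)
    (hb : ∃ x, (∑ k : Fin (K + 1), b k * Real.sin ((k : ℕ) * x)) ≠ 0)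
    (hb' : ∃ x, (∑ k : Fin (K + 1), b (Fin.rev k) * Real.sin ((k : ℕ) * x)) ≠ 0) :
    (2 * K : ℝ≥0∞) ≤
      Zcount (fun x => ∑ k : Fin (K + 1), b k * Real.sin ((k : ℕ) * x)) +
      Zcount (fun x => ∑ k : Fin (K + 1), b (Fin.rev k) * Real.sin ((k : ℕ) * x)) :=
  le_trans (by exact_mod_cast palindromic_sine_zero_count_general K b)
    (add_le_add (encard_zeros_le_Zcount (analyticOnNhd_sinePoly b) hb)
      (encard_zeros_le_Zcount (analyticOnNhd_sinePoly fun k => b k.rev) hb'))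
end
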